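/- Let s = (s_1,…,s_m) be a scoring vector, let the n agents' rankings be independent and uniformly distributed over all m! rankings of {1,…,m} (the FI model), and let k = (k_1,…,k_n) be a vector of nonnegative integers summing to m. Then for each agent i, the expected utility of agent i under the non-interleaving picking sequence k equals the average, over all c_i-element subsets S of {1,…,m}, of the sum of s_r over the k_i smallest elements r of {1,…,m} \ S, where c_i = k_1 + … + k_{i-1}. In particular, this expected utility depends only on k_i and c_i. -/

import Mathlib

/-- The `k` most preferred items of `S` under the ranking `σ` (where `σ r` is the item of
0-based rank `r`, so `σ.symm x` is the rank of item `x`): the items of `S` having fewer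
than `k` strictly better items inside `S`. -/
def topk {m : ℕ} (σ : Fin m ≃ Fin m) (S : Finset (Fin m)) (k : ℕ) : Finset (Fin m) :=
  S.filter fun x => (S.filter fun y => σ.symm y < σ.symm x).card < k

/-- Items remaining before the `i`-th agent (0-based) picks, under profile `P` (agent `i`
has ranking `P i`) and pick-count vector `k` (agent `i` picks `k i` items). -/
def remaining {m : ℕ} (P : ℕ → Fin m ≃ Fin m) (k : ℕ → ℕ) : ℕ → Finset (Fin m)
  | 0 => Finset.univ
  | i + 1 => remaining P k i \ topk (P i) (remaining P k i) (k i)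

/-- The set of items greedily picked by the `i`-th agent (0-based). -/
def alloc {m : ℕ} (P : ℕ → Fin m ≃ Fin m) (k : ℕ → ℕ) (i : ℕ) : Finset (Fin m) :=
  topk (P i) (remaining P k i) (k i)

/-- The utility of the `i`-th agent (0-based): the sum of the scores `s r` over the
1-based ranks `r` (in her own ranking) of the items she receives. -/
noncomputable def util {m : ℕ} (s : ℕ → ℝ) (P : ℕ → Fin m ≃ Fin m) (k : ℕ → ℕ)
    (i : ℕ) : ℝ :=
  ∑ x ∈ alloc P k i, s (((P i).symm x : ℕ) + 1)

/-- The `k` smallest elements of a finite set `A` of naturals: the elements of `A` having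
fewer than `k` strictly smaller elements inside `A`. -/
def smallestK (A : Finset ℕ) (k : ℕ) : Finset ℕ :=
  A.filter fun x => (A.filter fun y => y < x).card < k

/-- `g m s j k t` is the average, over all `t`-element subsets `S` of `{j,…,m}`, of the sum
of `s r` over the `k` smallest elements `r` of `{j,…,m} \ S`. -/
noncomputable def g (m : ℕ) (s : ℕ → ℝ) (j k t : ℕ) : ℝ :=
  (∑ S ∈ (Finset.Icc j m).powersetCard t,
      ∑ r ∈ smallestK (Finset.Icc j m \ S) k, s r) /
    (((Finset.Icc j m).powersetCard t).card : ℝ)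

/-- Extend a profile on `Fin n` to a profile indexed by `ℕ` (agents `≥ n` are irrelevant). -/
def extendProfile {m : ℕ} (n : ℕ) (Q : Fin n → Fin m ≃ Fin m) : ℕ → Fin m ≃ Fin m :=
  fun i => if h : i < n then Q ⟨i, h⟩ else Equiv.refl _

/-- Expected utility of the `i`-th agent (0-based) in the full independence model: the
average, over all `(m!)^n` equally likely profiles, of her utility under the
non-interleaving picking sequence `k`. -/
noncomputable def EUFI (n m : ℕ) (s : ℕ → ℝ) (k : ℕ → ℕ) (i : ℕ) : ℝ :=
  (∑ Q : Fin n → Fin m ≃ Fin m, util s (extendProfile n Q) k i) /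
    (Fintype.card (Fin n → Fin m ≃ Fin m) : ℝ)

open Finset in
/-- If `f` is injective on `S`, exactly `min k #S` elements of `S` have fewer than `k` elements
of `S` with a strictly smaller value of `f`. -/
theorem card_filter_card_filter_lt_lt {α β : Type*} [DecidableEq α] [LinearOrder β]
    {f : α → β} (hf : Function.Injective f) (S : Finset α) (k : ℕ) :
    (S.filter fun x => (S.filter fun y => f y < f x).card < k).card = min k S.card := by
  induction S using Finset.induction_on_max_value f with
  | empty => simp
  | insert a s ha hmax ih =>
    have hlt : ∀ y ∈ s, f y < f a := fun y hy =>
      lt_of_le_of_ne (hmax y hy) fun h => ha (hf h ▸ hy)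
    have hself : ((insert a s).filter fun y => f y < f a) = s := by
      rw [filter_insert, if_neg (lt_irrefl _), filter_true_of_mem hlt]
    have hother : (s.filter fun x => ((insert a s).filter fun y => f y < f x).card < k) =
        s.filter fun x => (s.filter fun y => f y < f x).card < k := by
      refine filter_congr fun x hx => ?_
      rw [filter_insert, if_neg (hmax x hx).not_gt]
    rw [filter_insert, hself, hother]
    split_ifs with h
    · rw [card_insert_of_notMem (by simp [ha]), card_insert_of_notMem ha, ih]
      omega
    · rw [card_insert_of_notMem ha, ih]
      omega

theorem card_topk {m : ℕ} (σ : Fin m ≃ Fin m) (S : Finset (Fin m)) (k : ℕ) :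
    (topk σ S k).card = min k S.card :=
  card_filter_card_filter_lt_lt σ.symm.injective S k

theorem card_remaining {m : ℕ} (P : ℕ → Fin m ≃ Fin m) (k : ℕ → ℕ) (i : ℕ) :
    (remaining P k i).card = m - ∑ j ∈ Finset.range i, k j := by
  induction i with
  | zero => simp [remaining]
  | succ i ih =>
    have hsub : topk (P i) (remaining P k i) (k i) ⊆ remaining P k i :=
      Finset.filter_subset _ _
    rw [remaining, Finset.card_sdiff_of_subset hsub, card_topk, ih, Finset.sum_range_succ]
    omega

/-- The items remaining before agent `i` picks depend only on the rankings of earlier agents. -/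
theorem remaining_congr {m : ℕ} {P P' : ℕ → Fin m ≃ Fin m} (k : ℕ → ℕ) {i : ℕ}
    (h : ∀ j < i, P j = P' j) : remaining P k i = remaining P' k i := by
  induction i with
  | zero => rfl
  | succ i ih => rw [remaining, remaining, ih fun j hj => h j (by omega), h i (by omega)]

/-- The 1-based numbering of `Fin m`. -/
def oneBased (m : ℕ) : Fin m ↪ ℕ :=
  ⟨fun r => r + 1, fun a b h => by ext; simpa using h⟩

theorem oneBased_apply {m : ℕ} (r : Fin m) : oneBased m r = r + 1 := rfl

theorem map_oneBased_univ (m : ℕ) : Finset.univ.map (oneBased m) = Finset.Icc 1 m := by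
  ext x
  simp only [Finset.mem_map, Finset.mem_univ, true_and, Finset.mem_Icc, oneBased_apply]
  constructor
  · rintro ⟨a, rfl⟩
    omega
  · intro h
    exact ⟨⟨x - 1, by omega⟩, Nat.sub_add_cancel h.1⟩

/-- In terms of ranks, the `k` most preferred items are the `k` smallest ranks. -/
theorem smallestK_map_rank {m : ℕ} (σ : Fin m ≃ Fin m) (S : Finset (Fin m)) (k : ℕ) :
    smallestK ((S.map σ.symm.toEmbedding).map (oneBased m)) k =
      ((topk σ S k).map σ.symm.toEmbedding).map (oneBased m) := by
  simp only [smallestK, topk, Finset.map_map, Finset.filter_map, Finset.card_map]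
  congr 1
  refine Finset.filter_congr fun x _ => ?_
  simp [oneBased_apply, Function.comp_def]

/-- The total score of the `k` smallest ranks outside the set `T` of (0-based) taken ranks. -/
noncomputable def scoreOutside {m : ℕ} (s : ℕ → ℝ) (k : ℕ) (T : Finset (Fin m)) : ℝ :=
  ∑ r ∈ smallestK (Finset.Icc 1 m \ T.map (oneBased m)) k, s r

theorem util_eq_scoreOutside {m : ℕ} (s : ℕ → ℝ) (P : ℕ → Fin m ≃ Fin m) (k : ℕ → ℕ) (i : ℕ) :
    util s P k i =
      scoreOutside s (k i) ((remaining P k i)ᶜ.map (P i).symm.toEmbedding) := by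
  have h : Finset.Icc 1 m \ ((remaining P k i)ᶜ.map (P i).symm.toEmbedding).map (oneBased m) =
      ((remaining P k i).map (P i).symm.toEmbedding).map (oneBased m) := by
    rw [← map_oneBased_univ, ← Finset.map_sdiff, ← Finset.compl_eq_univ_sdiff]
    congr 1
    ext x
    simp [Finset.mem_map_equiv]
  rw [scoreOutside, h, smallestK_map_rank, Finset.sum_map, Finset.sum_map]
  rfl

/-- The image of a `c`-element set under a uniform permutation is a uniform `c`-element set. -/
theorem sum_perm_map_mul_card_powersetCard {α : Type*} [Fintype α] [DecidableEq α]
    (H : Finset α → ℝ) (T : Finset α) :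
    (∑ τ : Equiv.Perm α, H (T.map τ.toEmbedding)) *
        ((Finset.univ : Finset α).powersetCard T.card).card =
      Fintype.card (Equiv.Perm α) *
        ∑ B ∈ (Finset.univ : Finset α).powersetCard T.card, H B := by
  have hconst : ∀ B ∈ (Finset.univ : Finset α).powersetCard T.card,
      ∑ τ : Equiv.Perm α, H (B.map τ.toEmbedding) =
        ∑ τ : Equiv.Perm α, H (T.map τ.toEmbedding) := by
    intro B hB
    obtain ⟨ρ, rfl⟩ : ∃ ρ : Equiv.Perm α, T.map ρ.toEmbedding = B := by
      have e : T ≃ B := Finset.equivOfCardEq (Finset.mem_powersetCard.1 hB).2.symm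
      refine ⟨e.extendSubtype, Finset.eq_of_subset_of_card_le ?_ ?_⟩
      · intro x hx
        obtain ⟨y, hy, rfl⟩ := Finset.mem_map.1 hx
        exact e.extendSubtype_mem y hy
      · rw [Finset.card_map, (Finset.mem_powersetCard.1 hB).2]
    refine Fintype.sum_equiv (Equiv.mulRight ρ) _ _ fun τ => ?_
    rw [Finset.map_map]
    rfl
  have hinv : ∀ τ : Equiv.Perm α,
      ∑ B ∈ (Finset.univ : Finset α).powersetCard T.card, H (B.map τ.toEmbedding) =
        ∑ B ∈ (Finset.univ : Finset α).powersetCard T.card, H B := by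
    intro τ
    conv_rhs => rw [← Finset.map_univ_equiv τ, Finset.powersetCard_map, Finset.sum_map]
    rfl
  calc _ = ∑ B ∈ (Finset.univ : Finset α).powersetCard T.card,
        ∑ τ : Equiv.Perm α, H (B.map τ.toEmbedding) := by
        rw [Finset.sum_congr rfl hconst, Finset.sum_const, nsmul_eq_mul, mul_comm]
    _ = _ := by
        rw [Finset.sum_comm, Finset.sum_congr rfl fun τ _ => hinv τ, Finset.sum_const,
          nsmul_eq_mul, Finset.card_univ]

theorem sum_powersetCard_scoreOutside (m : ℕ) (s : ℕ → ℝ) (k c : ℕ) :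
    ∑ B ∈ (Finset.univ : Finset (Fin m)).powersetCard c, scoreOutside s k B =
      ∑ S ∈ (Finset.Icc 1 m).powersetCard c,
        ∑ r ∈ smallestK (Finset.Icc 1 m \ S) k, s r := by
  conv_rhs => rw [← map_oneBased_univ, Finset.powersetCard_map, Finset.sum_map,
    map_oneBased_univ]
  rfl

/-- Relabelling the ranks of agent `i` by `τ` leaves the items remaining before her turn unchanged
and permutes their ranks by `τ`. -/
theorem util_extendProfile_mul_mulSingle {n m : ℕ} (s : ℕ → ℝ) (k : ℕ → ℕ) (i : Fin n)
    (Q : Fin n → Equiv.Perm (Fin m)) (τ : Equiv.Perm (Fin m)) :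
    util s (extendProfile n (Q * Pi.mulSingle i τ⁻¹)) k i =
      scoreOutside s (k i) (((remaining (extendProfile n Q) k i)ᶜ.map
        (Q i).symm.toEmbedding).map τ.toEmbedding) := by
  have hrem : remaining (extendProfile n (Q * Pi.mulSingle i τ⁻¹)) k i =
      remaining (extendProfile n Q) k i := by
    refine remaining_congr k fun j hj => ?_
    have hjn : j < n := hj.trans i.2
    have hne : (⟨j, hjn⟩ : Fin n) ≠ i := fun h => hj.ne (congrArg Fin.val h)
    simp [extendProfile, hjn, Pi.mulSingle_eq_of_ne hne]
  have hi : extendProfile n (Q * Pi.mulSingle i τ⁻¹) i = Q i * τ⁻¹ := by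
    simp [extendProfile]
  rw [util_eq_scoreOutside, hrem, hi, Finset.map_map]
  rfl

/-- If the sums of `f : (ι → G) → ℝ` along the cosets of the `i`-th factor all equal `C`, then
the average of `f` is `C / |G|`. -/
theorem card_mul_sum_of_sum_mul_mulSingle {ι G : Type*} [Fintype ι] [DecidableEq ι] [Group G]
    [Fintype G] (i : ι) (f : (ι → G) → ℝ) (C : ℝ)
    (h : ∀ Q : ι → G, ∑ τ : G, f (Q * Pi.mulSingle i τ⁻¹) = C) :
    (Fintype.card G : ℝ) * ∑ Q : ι → G, f Q = Fintype.card (ι → G) * C := by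
  calc _ = ∑ τ : G, ∑ Q : ι → G, f (Q * Pi.mulSingle i τ⁻¹) := by
        rw [← Finset.card_univ, ← nsmul_eq_mul, ← Finset.sum_const]
        exact Finset.sum_congr rfl fun τ _ =>
          (Equiv.sum_comp (Equiv.mulRight (Pi.mulSingle i τ⁻¹ : ι → G)) f).symm
    _ = _ := by
        rw [Finset.sum_comm, Finset.sum_congr rfl fun Q _ => h Q, Finset.sum_const,
          nsmul_eq_mul, Finset.card_univ]

/-- Averaged over the ranking of agent `i` alone, her utility is given by `g`. -/
theorem sum_util_extendProfile_mul_mulSingle {n m : ℕ} (s : ℕ → ℝ) (k : ℕ → ℕ) (i : Fin n)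
    (hcm : ∑ j ∈ Finset.range i, k j ≤ m) (Q : Fin n → Equiv.Perm (Fin m)) :
    ∑ τ : Equiv.Perm (Fin m), util s (extendProfile n (Q * Pi.mulSingle i τ⁻¹)) k i =
      Fintype.card (Equiv.Perm (Fin m)) * g m s 1 (k i) (∑ j ∈ Finset.range i, k j) := by
  rw [Finset.sum_congr rfl fun τ _ => util_extendProfile_mul_mulSingle s k i Q τ]
  have h := sum_perm_map_mul_card_powersetCard (scoreOutside s (k i))
    ((remaining (extendProfile n Q) k i)ᶜ.map (Q i).symm.toEmbedding)
  have hcard : ((remaining (extendProfile n Q) k i)ᶜ.map (Q i).symm.toEmbedding).card =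
      ∑ j ∈ Finset.range i, k j := by
    rw [Finset.card_map, Finset.card_compl, card_remaining, Fintype.card_fin]
    omega
  rw [hcard, sum_powersetCard_scoreOutside] at h
  rw [g, ← mul_div_assoc, eq_div_iff, ← h]
  · simp [Finset.card_powersetCard]
  · simp [Finset.card_powersetCard, (Nat.choose_pos hcm).ne']

/-- In the full independence model, the expected utility of agent `i` under the
non-interleaving picking sequence `k` equals the average, over all `c_i`-element subsets
`S` of `{1,…,m}`, of the sum of `s r` over the `k_i` smallest elements `r` of `{1,…,m} \ S`,
where `c_i = k_1 + ⋯ + k_{i-1}`.  In particular this expected utility depends only on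
`k_i` and `c_i`. -/
theorem fi_expected_utility_eq_g
    (n m : ℕ) (hn : 0 < n) (hm : 0 < m) (s : ℕ → ℝ)
    (hmono : ∀ i j : ℕ, 1 ≤ i → i ≤ j → j ≤ m → s j ≤ s i)
    (hnonneg : ∀ j : ℕ, 1 ≤ j → j ≤ m → 0 ≤ s j)
    (k : ℕ → ℕ) (hk : ∑ i ∈ Finset.range n, k i = m) :
    ∀ i < n, EUFI n m s k i = g m s 1 (k i) (∑ j ∈ Finset.range i, k j) := by
  intro i hi
  have hcm : ∑ j ∈ Finset.range i, k j ≤ m :=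
    (Finset.sum_le_sum_of_subset (Finset.range_mono hi.le)).trans hk.le
  have htotal := card_mul_sum_of_sum_mul_mulSingle ⟨i, hi⟩
    (fun Q : Fin n → Equiv.Perm (Fin m) => util s (extendProfile n Q) k i)
    (Fintype.card (Equiv.Perm (Fin m)) * g m s 1 (k i) (∑ j ∈ Finset.range i, k j))
    fun Q => sum_util_extendProfile_mul_mulSingle s k ⟨i, hi⟩ hcm Q
  rw [mul_left_comm] at htotal
  have hF0 : (Fintype.card (Equiv.Perm (Fin m)) : ℝ) ≠ 0 :=
    Nat.cast_ne_zero.2 Fintype.card_ne_zero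
  have hM0 : (Fintype.card (Fin n → Equiv.Perm (Fin m)) : ℝ) ≠ 0 :=
    Nat.cast_ne_zero.2 Fintype.card_ne_zero
  rw [EUFI, div_eq_iff hM0, mul_left_cancel₀ hF0 htotal, mul_comm]
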